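/- Let A be a unital C*-algebra, n,m ≥ 1, q ∈ ℂ with |q| < 1, and let v_1,…,v_{n+m} ∈ A satisfy the Cuntz–Toeplitz relations. Set Q̃ = Σ_{i=1}^n v_i v_i* and, for r = 1,…,m, w̃_r = v_{n+r}·((1−Q̃) + (1−|q|²)^{1/2} Q̃) (the second factor being the positive square root of 1 − |q|² Q̃, since Q̃ is a projection). Then for each r the series Σ_{k≥0} q^k Σ_{μ ∈ {1,…,n}^k} v_μ w̃_r v_μ* converges in norm in A, and its sum w_r satisfies w_r* w_l = δ_{rl}·1 for all r,l = 1,…,m and v_i* w_r = q w_r v_i* for all i = 1,…,n and r = 1,…,m. -/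

import Mathlib

open scoped BigOperators

/-- Product `v_{μ_1} ⋯ v_{μ_k}` associated to a word `μ ∈ {1,…,n}^k`. -/
noncomputable def wordProd {A : Type*} [Monoid A] {n k : ℕ} (s : Fin n → A)
    (μ : Fin k → Fin n) : A :=
  (List.ofFn fun i => s (μ i)).prod

/-!
The map `Φ x = ∑ i, v i * x * star (v i)`, over the generators `v_1, …, v_n`, is a star
endomorphism of `A`, and summing over the words of length `k` is the same as applying `Φ ^ k`.
Hence `w_r` is the Neumann series of `q • Φ` at `w̃_r`, that is, the solution of
`w = w̃_r + q • Φ w`. As `w̃_r` starts with `v_{n+r}`, its range is orthogonal to that of `Φ 1`,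
so the mixed terms in `star w_r * w_l` vanish, and both `star w_r * w_l` and `δ_{rl}` solve
`y = δ_{rl} (1 - |q|² • Φ 1) + |q|² • Φ y`, whose solution is unique because `Φ` is contractive.
Multiplying `w = w̃_r + q • Φ w` by `star (v i)` gives the commutation relation.
-/

section NeumannSeries

variable {𝕜 E : Type*} [NontriviallyNormedField 𝕜] [NormedAddCommGroup E] [NormedSpace 𝕜 E]
  {T : E →L[𝕜] E}

theorem summable_pow_apply_of_norm_lt_one [CompleteSpace E] (hT : ‖T‖ < 1) (x : E) :
    Summable fun k ↦ (T ^ k) x :=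
  (summable_geometric_of_norm_lt_one hT).map (ContinuousLinearMap.apply 𝕜 E x)
    (ContinuousLinearMap.apply 𝕜 E x).continuous

theorem tsum_pow_apply_eq_add_apply [CompleteSpace E] (hT : ‖T‖ < 1) (x : E) :
    ∑' k, (T ^ k) x = x + T (∑' k, (T ^ k) x) := by
  have hsum := summable_pow_apply_of_norm_lt_one hT x
  rw [T.map_tsum hsum, hsum.tsum_eq_zero_add]
  simp only [pow_zero, pow_succ', one_apply_eq_self, mul_apply_eq_comp]

theorem eq_of_eq_add_apply {x a b : E} (hT : ‖T‖ < 1) (ha : a = x + T a) (hb : b = x + T b) :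
    a = b := by
  have hsub : a - b = T (a - b) := by
    rw [map_sub]
    nth_rw 1 [ha, hb]
    abel
  have hle : ‖a - b‖ ≤ ‖T‖ * ‖a - b‖ := (congrArg norm hsub).trans_le (T.le_opNorm _)
  have hnorm : ‖a - b‖ ≤ 0 := by nlinarith [norm_nonneg (a - b)]
  exact sub_eq_zero.mp (norm_le_zero_iff.mp hnorm)

end NeumannSeries

section StarHomToCLM

open scoped CStarAlgebra

/-- A star homomorphism of C⋆-algebras as a continuous linear map, so that its powers and its
operator norm are available. -/
def starHomToCLM {A B : Type*} [NonUnitalCStarAlgebra A] [NonUnitalCStarAlgebra B]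
    (Φ : A →⋆ₙₐ[ℂ] B) : A →L[ℂ] B where
  toLinearMap := Φ
  cont := map_continuous Φ

theorem starHomToCLM_apply {A B : Type*} [NonUnitalCStarAlgebra A] [NonUnitalCStarAlgebra B]
    (Φ : A →⋆ₙₐ[ℂ] B) (x : A) : starHomToCLM Φ x = Φ x := rfl

theorem norm_smul_starHomToCLM_lt_one {A B : Type*} [NonUnitalCStarAlgebra A]
    [NonUnitalCStarAlgebra B] (Φ : A →⋆ₙₐ[ℂ] B) {q : ℂ} (hq : ‖q‖ < 1) :
    ‖q • starHomToCLM Φ‖ < 1 := by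
  have hΦ : ‖starHomToCLM Φ‖ ≤ 1 :=
    ContinuousLinearMap.opNorm_le_bound _ zero_le_one fun x ↦ by
      simpa only [one_mul, starHomToCLM_apply] using NonUnitalStarAlgHom.norm_apply_le Φ x
  calc ‖q • starHomToCLM Φ‖ ≤ ‖q‖ * ‖starHomToCLM Φ‖ := ContinuousLinearMap.opNorm_smul_le q _
    _ ≤ ‖q‖ := mul_le_of_le_one_right (norm_nonneg q) hΦ
    _ < 1 := hq

end StarHomToCLM

section OrthogonalRange

variable {F A B : Type*} [FunLike F A B]

theorem map_mul_eq_zero_of_map_one_mul [MulOneClass A] [SemigroupWithZero B] [MulHomClass F A B]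
    {Φ : F} {y : B} (hy : Φ 1 * y = 0) (z : A) : Φ z * y = 0 := by
  rw [← mul_one z, map_mul, mul_assoc, hy, mul_zero]

theorem star_mul_map_eq_zero_of_map_one_mul [MulOneClass A] [InvolutiveStar A]
    [NonUnitalSemiring B] [StarRing B] [MulHomClass F A B] [StarHomClass F A B]
    {Φ : F} {x : B} (hx : Φ 1 * x = 0) (z : A) : star x * Φ z = 0 := by
  simpa [← map_star] using congrArg star (map_mul_eq_zero_of_map_one_mul hx (star z))

end OrthogonalRange

section StarAlgebra

variable {A : Type*} [Ring A] [StarRing A] [Algebra ℂ A] [StarModule ℂ A] {q : ℂ}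

theorem star_mul_eq_add_smul_map {Φ : A →⋆ₙₐ[ℂ] A} {a b x y : A} (hx : Φ 1 * x = 0)
    (hy : Φ 1 * y = 0) (ha : a = x + q • Φ a) (hb : b = y + q • Φ b) :
    star a * b = star x * y + (‖q‖ ^ 2 : ℂ) • Φ (star a * b) := by
  have hxb : star x * Φ b = 0 := star_mul_map_eq_zero_of_map_one_mul hx b
  have hay : star (Φ a) * y = 0 := by rw [← map_star, map_mul_eq_zero_of_map_one_mul hy]
  have hq : star q * q = (‖q‖ : ℂ) ^ 2 := Complex.conj_mul' q
  calc star a * b = star (x + q • Φ a) * (y + q • Φ b) := by rw [← ha, ← hb]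
    _ = star x * y + (star q * q) • (star (Φ a) * Φ b) := by
      simp only [star_add, star_smul, add_mul, mul_add, mul_smul_comm, smul_mul_assoc, hxb, hay,
        smul_zero, add_zero, zero_add, smul_smul, mul_comm q]
    _ = star x * y + (‖q‖ ^ 2 : ℂ) • Φ (star a * b) := by rw [hq, map_mul, map_star]

/-- The operator `(1 - |q|² P)^{1/2}` for a projection `P`, written through the two spectral
projections `1 - P` and `P`. -/
noncomputable def defectOperator (q : ℂ) (P : A) : A :=
  (1 - P) + ((Real.sqrt (1 - ‖q‖ ^ 2) : ℝ) : ℂ) • P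

theorem star_defectOperator_mul_self {P : A} (hP : IsStarProjection P) (hq : ‖q‖ ≤ 1) :
    star (defectOperator q P) * defectOperator q P = 1 - (‖q‖ ^ 2 : ℂ) • P := by
  have hsqrt : ((√(1 - ‖q‖ ^ 2) : ℝ) : ℂ) * ((√(1 - ‖q‖ ^ 2) : ℝ) : ℂ) = 1 - (‖q‖ : ℂ) ^ 2 := by
    rw [← Complex.ofReal_mul, Real.mul_self_sqrt (sub_nonneg.mpr (pow_le_one₀ (norm_nonneg q) hq))]
    push_cast
    rfl
  have hPP : P * P = P := hP.isIdempotentElem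
  have hstar : star (defectOperator q P) = defectOperator q P := by
    simp [defectOperator, hP.isSelfAdjoint.star_eq]
  rw [hstar, defectOperator, add_mul, mul_add, mul_add, smul_mul_smul_comm, hsqrt, hPP,
    mul_smul_comm, smul_mul_assoc, hP.one_sub_mul_self, hP.mul_one_sub_self,
    hP.one_sub.isIdempotentElem.eq, sub_smul, one_smul, smul_zero]
  abel

end StarAlgebra

/-- The Cuntz–Toeplitz relations: the `v i` are isometries with pairwise orthogonal ranges. -/
def IsCuntzToeplitz {ι A : Type*} [DecidableEq ι] [Semiring A] [Star A] (v : ι → A) : Prop :=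
  ∀ i j, star (v i) * v j = if i = j then 1 else 0

namespace IsCuntzToeplitz

theorem comp {ι κ A : Type*} [DecidableEq ι] [DecidableEq κ] [Semiring A] [Star A] {v : ι → A}
    (hv : IsCuntzToeplitz v) {e : κ → ι} (he : e.Injective) : IsCuntzToeplitz (v ∘ e) := by
  intro i j
  simp only [Function.comp_apply, hv (e i) (e j), he.eq_iff]

section Endomorphism

variable {ι A : Type*} [Fintype ι] [DecidableEq ι] [Semiring A] [StarRing A] {s : ι → A}

theorem star_mul_sum_conj (hs : IsCuntzToeplitz s) (i : ι) (x : A) :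
    star (s i) * ∑ j, s j * x * star (s j) = x * star (s i) := by
  simp only [Finset.mul_sum, ← mul_assoc, hs i, ite_mul, one_mul, zero_mul, Finset.sum_ite_eq,
    Finset.mem_univ, if_true]

variable [Algebra ℂ A]

/-- The canonical endomorphism `x ↦ ∑ i, s i * x * star (s i)` of a finite Cuntz–Toeplitz family.
It is not unital in general: its value at `1` is the sum of the range projections. -/
def endomorphism (hs : IsCuntzToeplitz s) : A →⋆ₙₐ[ℂ] A where
  toFun x := ∑ i, s i * x * star (s i)
  map_smul' c x := by simp [Finset.smul_sum]
  map_zero' := by simp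
  map_add' x y := by simp [mul_add, add_mul, Finset.sum_add_distrib]
  map_mul' x y := by
    rw [Finset.sum_mul]
    refine Finset.sum_congr rfl fun i _ ↦ ?_
    rw [mul_assoc (s i * x), hs.star_mul_sum_conj]
    simp only [mul_assoc]
  map_star' x := by simp [star_sum, mul_assoc]

theorem endomorphism_apply (hs : IsCuntzToeplitz s) (x : A) :
    hs.endomorphism x = ∑ i, s i * x * star (s i) := rfl

theorem star_mul_endomorphism (hs : IsCuntzToeplitz s) (i : ι) (x : A) :
    star (s i) * hs.endomorphism x = x * star (s i) :=
  hs.star_mul_sum_conj i x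

theorem endomorphism_mul_eq_zero (hs : IsCuntzToeplitz s) {y : A} (hy : ∀ i, star (s i) * y = 0)
    (x : A) : hs.endomorphism x * y = 0 := by
  simp only [endomorphism_apply, Finset.sum_mul, mul_assoc, hy, mul_zero, Finset.sum_const_zero]

theorem star_mul_of_eq_add_smul_endomorphism (hs : IsCuntzToeplitz s) {q : ℂ} {a x : A} {i : ι}
    (hx : star (s i) * x = 0) (ha : a = x + q • hs.endomorphism a) :
    star (s i) * a = q • (a * star (s i)) := by
  conv_lhs => rw [ha, mul_add, hx, zero_add, mul_smul_comm, hs.star_mul_endomorphism]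

theorem sum_words_conj_succ (hs : IsCuntzToeplitz s) (k : ℕ) (x : A) :
    ∑ μ : Fin (k + 1) → ι,
        (List.ofFn fun j ↦ s (μ j)).prod * x * star (List.ofFn fun j ↦ s (μ j)).prod =
      hs.endomorphism (∑ μ : Fin k → ι,
        (List.ofFn fun j ↦ s (μ j)).prod * x * star (List.ofFn fun j ↦ s (μ j)).prod) := by
  rw [endomorphism_apply, ← (Fin.consEquiv fun _ ↦ ι).sum_comp, Fintype.sum_prod_type]
  simp only [Finset.mul_sum, Finset.sum_mul, Fin.consEquiv_apply, List.ofFn_succ, Fin.cons_zero,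
    Fin.cons_succ, List.prod_cons, star_mul, mul_assoc]

end Endomorphism

section CStarAlgebra

variable {ι A : Type*} [DecidableEq ι] [CStarAlgebra A]

theorem pow_smul_sum_words_conj [Fintype ι] {s : ι → A} (hs : IsCuntzToeplitz s)
    (q : ℂ) (k : ℕ) (x : A) :
    q ^ k • ∑ μ : Fin k → ι,
        (List.ofFn fun j ↦ s (μ j)).prod * x * star (List.ofFn fun j ↦ s (μ j)).prod =
      ((q • starHomToCLM hs.endomorphism) ^ k) x := by
  rw [smul_pow, smul_apply]
  congr 1
  induction k with
  | zero => simp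
  | succ k ih => rw [hs.sum_words_conj_succ, ih, pow_succ', mul_apply_eq_comp, starHomToCLM_apply]

theorem of_eq_add_smul_map {Φ : A →⋆ₙₐ[ℂ] A} {q : ℂ} {t w : ι → A}
    (ht : IsCuntzToeplitz t) (hΦt : ∀ r, Φ 1 * t r = 0) (hq : ‖q‖ < 1)
    (hw : ∀ r, w r = t r * defectOperator q (Φ 1) + q • Φ (w r)) : IsCuntzToeplitz w := by
  intro r l
  set D := defectOperator q (Φ 1)
  have hΦtD (r : ι) : Φ 1 * (t r * D) = 0 := by rw [← mul_assoc, hΦt, zero_mul]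
  have hDD : star D * D = 1 - (‖q‖ ^ 2 : ℂ) • Φ 1 :=
    star_defectOperator_mul_self (.map (.one A) Φ) hq.le
  have hsource : star (t r * D) * (t l * D) = if r = l then star D * D else 0 := by
    rw [star_mul, mul_assoc, ← mul_assoc (star (t r)), ht r l]
    split_ifs <;> simp
  have hqq : ‖(‖q‖ ^ 2 : ℂ)‖ < 1 := by
    simpa using pow_lt_one₀ (norm_nonneg q) hq two_ne_zero
  refine eq_of_eq_add_apply (norm_smul_starHomToCLM_lt_one Φ hqq)
    (star_mul_eq_add_smul_map (hΦtD r) (hΦtD l) (hw r) (hw l)) ?_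
  rw [hsource, hDD]
  split_ifs <;> simp [starHomToCLM_apply]

end CStarAlgebra

end IsCuntzToeplitz

theorem stmt_7_general {ι κ A : Type*} [Fintype ι] [DecidableEq ι] [DecidableEq κ] [CStarAlgebra A]
    {q : ℂ} (hq : ‖q‖ < 1) {v : ι ⊕ κ → A} (hv : IsCuntzToeplitz v)
    {Q : A} (hQ : Q = ∑ i, v (.inl i) * star (v (.inl i)))
    {wt : κ → A} (hwt : ∀ r, wt r = v (.inr r) * defectOperator q Q)
    {f : κ → ℕ → A}
    (hf : ∀ r k, f r k = q ^ k • ∑ μ : Fin k → ι, (List.ofFn fun j ↦ v (.inl (μ j))).prod * wt r *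
      star (List.ofFn fun j ↦ v (.inl (μ j))).prod) :
    (∀ r, Summable (f r)) ∧ IsCuntzToeplitz (fun r ↦ ∑' k, f r k) ∧
      ∀ i r, star (v (.inl i)) * ∑' k, f r k = q • ((∑' k, f r k) * star (v (.inl i))) := by
  have hs : IsCuntzToeplitz (v ∘ Sum.inl) := hv.comp Sum.inl_injective
  have ht : IsCuntzToeplitz (v ∘ Sum.inr) := hv.comp Sum.inr_injective
  have hst (i : ι) (r : κ) : star (v (.inl i)) * v (.inr r) = 0 := by simp [hv (.inl i) (.inr r)]
  have hQ_eq : hs.endomorphism 1 = Q := by simp [hQ, hs.endomorphism_apply]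
  have hT := norm_smul_starHomToCLM_lt_one hs.endomorphism hq
  have hf_eq (r : κ) : f r = fun k ↦ ((q • starHomToCLM hs.endomorphism) ^ k) (wt r) :=
    funext fun k ↦ (hf r k).trans (hs.pow_smul_sum_words_conj q k (wt r))
  have hw (r : κ) : ∑' k, f r k = wt r + q • hs.endomorphism (∑' k, f r k) := by
    rw [hf_eq]
    exact tsum_pow_apply_eq_add_apply hT (wt r)
  refine ⟨fun r ↦ hf_eq r ▸ summable_pow_apply_of_norm_lt_one hT (wt r), ?_, fun i r ↦ ?_⟩
  · refine ht.of_eq_add_smul_map (fun r ↦ hs.endomorphism_mul_eq_zero (hst · r) 1) hq fun r ↦ ?_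
    rw [hQ_eq, Function.comp_apply, ← hwt]
    exact hw r
  · have hs_wt : star (v (.inl i)) * wt r = 0 := by rw [hwt, ← mul_assoc, hst, zero_mul]
    exact hs.star_mul_of_eq_add_smul_endomorphism hs_wt (hw r)

theorem stmt_7 {A : Type*} [NormedRing A] [StarRing A] [CStarRing A]
    [NormedAlgebra ℂ A] [StarModule ℂ A] [CompleteSpace A]
    {n m : ℕ} (hn : 1 ≤ n) (hm : 1 ≤ m) (q : ℂ) (hq : ‖q‖ < 1)
    (v : Fin (n + m) → A)
    (hct : ∀ i j : Fin (n + m), star (v i) * v j = if i = j then 1 else 0)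
    (Q : A) (hQ : Q = ∑ i : Fin n, v (Fin.castAdd m i) * star (v (Fin.castAdd m i)))
    (wt : Fin m → A)
    (hwt : ∀ r, wt r = v (Fin.natAdd n r) *
      ((1 - Q) + ((Real.sqrt (1 - ‖q‖ ^ 2) : ℝ) : ℂ) • Q))
    (f : Fin m → ℕ → A)
    (hf : ∀ r k, f r k = q ^ k • ∑ μ : Fin k → Fin n,
      wordProd (fun i => v (Fin.castAdd m i)) μ * wt r *
        star (wordProd (fun i => v (Fin.castAdd m i)) μ)) :
    (∀ r : Fin m, Summable (f r)) ∧
    (∀ r l : Fin m, star (∑' k, f r k) * (∑' k, f l k) = if r = l then 1 else 0) ∧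
    (∀ (i : Fin n) (r : Fin m),
      star (v (Fin.castAdd m i)) * (∑' k, f r k)
        = q • ((∑' k, f r k) * star (v (Fin.castAdd m i)))) := by
  let _ : CStarAlgebra A := {}
  exact stmt_7_general hq (IsCuntzToeplitz.comp hct finSumFinEquiv.injective) hQ hwt hf
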